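/- arXiv:1107.0124 — 2 statements merged into one kernel-verified Lean document; each statement's English description precedes it below -/
import Mathlib

section
/- Let d ≥ 1, let I be a metric space, let S : I → Matrix d d ℂ be continuous, and let Λ ⊆ Σ_I^+ be a nonempty compact θ_+-invariant subset. Then ρ(S|Λ) = max_{i(·)∈Λ} limsup_{n→∞} ‖S_{i_n}···S_{i_1}‖^{1/n} (the maximum is attained), and moreover there exist a switching signal i(·) ∈ Λ and a vector x₀ ∈ ℂ^d with ‖x₀‖ = 1 such that ρ(S|Λ) = limsup_{n→∞} ‖S_{i_n}···S_{i_1} x₀‖^{1/n}. -/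
open Filter Topology MeasureTheory

/-- Operator norm on `d × d` complex matrices induced by the Euclidean norm on `ℂ^d`. -/
noncomputable def opNorm {d : ℕ} (A : Matrix (Fin d) (Fin d) ℂ) : ℝ :=
  ‖Matrix.toEuclideanCLM (𝕜 := ℂ) A‖

/-- Spectral radius of a complex matrix, as a real number. -/
noncomputable def specRad {d : ℕ} (A : Matrix (Fin d) (Fin d) ℂ) : ℝ :=
  (spectralRadius ℂ A).toReal

/-- `prodS S x n = S_{i_n} ⋯ S_{i_1}` where `i_k = x (k-1)`. -/
noncomputable def prodS {d : ℕ} {I : Type*} (S : I → Matrix (Fin d) (Fin d) ℂ)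
    (x : ℕ → I) : ℕ → Matrix (Fin d) (Fin d) ℂ
  | 0 => 1
  | n + 1 => S (x n) * prodS S x n

/-- `Λ` is invariant under the one-sided shift `θ₊`. -/
def ShiftInv {I : Type*} (Λ : Set (ℕ → I)) : Prop :=
  ∀ x ∈ Λ, (fun n => x (n + 1)) ∈ Λ

/-- Generalized spectral radius of `S` restricted to `Λ`. -/
noncomputable def gsr {d : ℕ} {I : Type*} (S : I → Matrix (Fin d) (Fin d) ℂ)
    (Λ : Set (ℕ → I)) : ℝ :=
  Filter.limsup (fun n : ℕ => ⨆ x : Λ, specRad (prodS S x.1 n) ^ (1 / (n : ℝ))) Filter.atTop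

/-! Let `ρ` be the joint spectral radius: the smallest exponential rate bounding the norms of all
products along `Λ`. A contraction argument produces, for every `g < ρ` and `m`, a signal and a unit
vector growing at rate at least `g` during the first `m` steps; by compactness some `y ∈ Λ` and unit
vector `v` satisfy `‖S_{i_n} ⋯ S_{i_1} v‖ ≥ ρ ^ n` for all `n`. Every limsup of norms along `Λ` is
at most `ρ`, so it only remains to see that `ρ` is the generalized spectral radius.

Suppose instead that, after scaling to `ρ = 1`, all spectral radii decay exponentially. Cut `y` into
blocks of length `N` and view the entries of the block products as sequences in `N`. Modulo
exponentially decaying sequences, and along an ultrafilter, the subexponential sequences have a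
residue *field*, over which every product of consecutive blocks is nilpotent, its characteristic
polynomial being a power of `X`. Ranges and kernels of such a family eventually have constant
complementary dimensions, and a skew set-pair inequality for subspaces yields one product whose
range meets its kernel trivially; being nilpotent it vanishes. Hence some product along `y` has norm
less than `1`, contradicting the choice of `y`. -/

section LinearAlgebra

open LinearMap (ker range)

theorem frequently_frequently_apply_ne_zero {ι R M N : Type*} [Semiring R] [AddCommMonoid M]
    [Module R M] [IsNoetherian R M] [AddCommMonoid N] [Module R N] {l : Filter ι} {f : ι → M}
    {φ : ι → M →ₗ[R] N} (h : ∃ᶠ a in l, φ a (f a) ≠ 0) :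
    ∃ᶠ a in l, ∃ᶠ b in l, φ b (f a) ≠ 0 := by
  -- Otherwise a finite spanning subset of the span of the relevant `f a` is eventually killed
  -- by `φ b`, hence so is `f b` itself.
  intro hzero
  simp only [Filter.not_frequently, not_not] at hzero
  set s : Set ι := {a | ∀ᶠ b in l, φ b (f a) = 0}
  obtain ⟨t, hts, hspan⟩ := (Submodule.fg_span_iff_fg_span_finset_subset (f '' s)).1
    (IsNoetherian.noetherian (Submodule.span R (f '' s)))
  have hkill : ∀ᶠ b in l, ∀ m ∈ t, φ b m = 0 := by
    rw [Filter.eventually_all_finset]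
    intro m hm
    obtain ⟨a, ha, rfl⟩ := hts hm
    exact ha
  refine h ?_
  filter_upwards [hkill, hzero] with b hb hbs
  have hle : Submodule.span R (f '' s) ≤ ker (φ b) := hspan ▸ Submodule.span_le.2 hb
  exact not_not.2 (hle (Submodule.subset_span (Set.mem_image_of_mem f hbs)))

variable {K V : Type*} [Field K] [AddCommGroup V] [Module K V]

-- A skew form of Lovász's set-pair theorem for subspaces: with `k = dim U a`, the `k`-forms "volume
-- of the projection to `U a` along `W a`" live in a finite-dimensional space.
theorem exists_frequently_disjoint_of_isCompl [FiniteDimensional K V] {ι : Type*} {l : Filter ι}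
    [l.NeBot] {U W : ι → Submodule K V} {k : ℕ} (hU : ∀ a, Module.finrank K (U a) = k)
    (hUW : ∀ a, IsCompl (U a) (W a)) : ∃ a, ∃ᶠ b in l, Disjoint (U b) (W a) := by
  let B (a : ι) : Module.Basis (Fin k) K (U a) := Module.finBasisOfFinrankEq K (U a) (hU a)
  let π (a : ι) : V →ₗ[K] U a := (U a).projectionOnto (W a) (hUW a)
  let w (b : ι) (i : Fin k) : V := B b i
  let vol (a : ι) : MultilinearMap K (fun _ : Fin k => V) K :=
    ((B a).det.compLinearMap (π a)).toMultilinearMap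
  let eval (b : ι) : MultilinearMap K (fun _ : Fin k => V) K →ₗ[K] K :=
    { toFun := fun f => f (w b), map_add' := fun _ _ => rfl, map_smul' := fun _ _ => rfl }
  have hself (a : ι) : eval a (vol a) = 1 := by
    have hπ : (fun i => π a (w a i)) = B a := by ext i; simp [π, w]
    change (B a).det (fun i => π a (w a i)) = 1
    rw [hπ, (B a).det_self]
  have hdisjoint (a b : ι) (hab : eval b (vol a) ≠ 0) : Disjoint (U b) (W a) := by
    have hli : LinearIndependent K (π a ∘ w b) :=
      not_imp_comm.1 ((B a).det.map_linearDependent _) hab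
    have hspan : Submodule.span K (Set.range (w b)) = U b := by
      rw [show w b = (U b).subtype ∘ B b from rfl, Set.range_comp, Submodule.span_image,
        (B b).span_eq, Submodule.map_top, Submodule.range_subtype]
    simpa [hspan, π] using Submodule.range_ker_disjoint hli
  obtain ⟨a, ha⟩ := (frequently_frequently_apply_ne_zero (l := l) (f := vol) (φ := eval)
    (Frequently.of_forall fun a => by simp [hself a])).exists
  exact ⟨a, ha.mono (hdisjoint a)⟩

theorem eq_zero_of_isNilpotent_of_disjoint_range_ker {R M : Type*} [Semiring R] [AddCommMonoid M]
    [Module R M] {f : Module.End R M} (hnil : IsNilpotent f) (hf : Disjoint (range f) (ker f)) :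
    f = 0 := by
  obtain ⟨n, hn⟩ := hnil
  induction n with
  | zero => exact LinearMap.ext fun x => by simpa using congr(f ($hn x))
  | succ n ih =>
    rcases n with _ | n
    · simpa using hn
    refine ih (LinearMap.ext fun x => (Submodule.disjoint_def.1 hf) _ ?_ ?_)
    · exact ⟨(f ^ n) x, by rw [pow_succ']; rfl⟩
    · simpa [pow_succ'] using congr($hn x)

/-- Two-parameter families `T a b`, for `a ≤ b`, composing like the evolution from time `a` to time
`b` of a discrete nonautonomous system; the values at `b < a` are irrelevant. -/
def IsEvolution {R : Type*} [Mul R] (T : ℕ → ℕ → R) : Prop :=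
  ∀ ⦃a b c⦄, a ≤ b → b ≤ c → T b c * T a b = T a c

namespace IsEvolution

theorem map {R R' F : Type*} [Mul R] [Mul R'] [FunLike F R R'] [MulHomClass F R R']
    {T : ℕ → ℕ → R} (hT : IsEvolution T) (φ : F) : IsEvolution fun a b => φ (T a b) :=
  fun _ _ _ hab hbc => by rw [← map_mul, hT hab hbc]

variable {T : ℕ → ℕ → Module.End K V}

theorem ker_le_ker (hT : IsEvolution T) {a b c : ℕ} (hab : a ≤ b) (hbc : b ≤ c) :
    ker (T a b) ≤ ker (T a c) := by
  rw [← hT hab hbc]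
  exact LinearMap.ker_le_ker_comp _ _

theorem range_le_range (hT : IsEvolution T) {a b c : ℕ} (hab : a ≤ b) (hbc : b ≤ c) :
    range (T a c) ≤ range (T b c) := by
  rw [← hT hab hbc]
  exact LinearMap.range_comp_le_range _ _

theorem exists_eventually_ker_eq [FiniteDimensional K V] (hT : IsEvolution T) (a : ℕ) :
    ∃ W : Submodule K V, ∀ᶠ b in atTop, ker (T a b) = W := by
  obtain ⟨n, hn⟩ := monotone_stabilizes_iff_noetherian.2 inferInstance
    (⟨fun n => ker (T a (a + n)), fun m n hmn => hT.ker_le_ker (by omega) (by omega)⟩ :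
      ℕ →o Submodule K V)
  refine ⟨ker (T a (a + n)), eventually_atTop.2 ⟨a + n, fun b hb => ?_⟩⟩
  obtain ⟨m, rfl⟩ := Nat.exists_eq_add_of_le ((Nat.le_add_right a n).trans hb)
  exact (hn m (by omega)).symm

theorem antitone_finrank_of_eventually_ker_eq [FiniteDimensional K V] (hT : IsEvolution T)
    {W : ℕ → Submodule K V} (hW : ∀ a, ∀ᶠ b in atTop, ker (T a b) = W a) :
    Antitone fun a => Module.finrank K (W a) := by
  intro a b hab
  obtain ⟨c, hac, hbc, hc⟩ := ((hW a).and ((hW b).and (eventually_ge_atTop b))).exists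
  have hrange := Submodule.finrank_mono (hT.range_le_range hab hc)
  have ha := (T a c).finrank_range_add_finrank_ker
  have hb := (T b c).finrank_range_add_finrank_ker
  rw [hac] at ha
  rw [hbc] at hb
  change Module.finrank K (W b) ≤ Module.finrank K (W a)
  omega

-- Past the time at which `ker (T a b)` has stabilized, the evolution is injective on the range of
-- `T a b`.
theorem isCompl_range_of_ker_eq [FiniteDimensional K V] (hT : IsEvolution T) {a b : ℕ}
    (hab : a ≤ b) {W : Submodule K V} (ha : ∀ c ≥ b, ker (T a c) = ker (T a b))
    (hb : ∀ᶠ c in atTop, ker (T b c) = W)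
    (hdim : Module.finrank K W = Module.finrank K (ker (T a b))) : IsCompl (range (T a b)) W := by
  rw [Submodule.isCompl_iff_disjoint _ _ (by rw [hdim, LinearMap.finrank_range_add_finrank_ker]),
    Submodule.disjoint_def]
  rintro _ ⟨v, rfl⟩ hv
  obtain ⟨c, rfl, hbc⟩ := (hb.and (eventually_ge_atTop b)).exists
  have hker : v ∈ ker (T a c) := by simpa [← hT hab hbc] using hv
  rwa [ha c hbc] at hker

theorem exists_eq_zero_of_isNilpotent [FiniteDimensional K V] (hT : IsEvolution T)
    (hnil : ∀ a b, a < b → IsNilpotent (T a b)) : ∃ b, T 0 b = 0 := by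
  choose W hW using hT.exists_eventually_ker_eq
  have hdim := hT.antitone_finrank_of_eventually_ker_eq hW
  obtain ⟨a₀, ha₀⟩ : ∃ a₀, ∀ a ≥ a₀, Module.finrank K (W a) = Module.finrank K (W a₀) :=
    ⟨Function.argmin fun a => Module.finrank K (W a), fun a ha =>
      (hdim ha).antisymm (Function.argmin_le (fun a => Module.finrank K (W a)) a)⟩
  obtain ⟨b₀, hb₀⟩ := eventually_atTop.1 ((hW a₀).and (eventually_ge_atTop a₀))
  have ha₀b₀ : a₀ ≤ b₀ := (hb₀ b₀ le_rfl).2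
  have hker (n : ℕ) : ker (T a₀ (b₀ + n)) = W a₀ := (hb₀ _ (by omega)).1
  have hrank (n : ℕ) : Module.finrank K (range (T a₀ (b₀ + n))) =
      Module.finrank K V - Module.finrank K (W a₀) := by
    rw [← (T a₀ (b₀ + n)).finrank_range_add_finrank_ker, hker, Nat.add_sub_cancel]
  have hcompl (n : ℕ) : IsCompl (range (T a₀ (b₀ + n))) (W (b₀ + n)) :=
    hT.isCompl_range_of_ker_eq (by omega) (fun c hc => by rw [hker, (hb₀ c (by omega)).1])
      (hW (b₀ + n)) (by rw [hker, ha₀ _ (by omega)])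
  obtain ⟨m, hm⟩ := exists_frequently_disjoint_of_isCompl (l := atTop) hrank hcompl
  have hshift : Tendsto (fun n => b₀ + n) atTop atTop :=
    tendsto_atTop_mono (fun n => Nat.le_add_left n b₀) tendsto_id
  obtain ⟨n, hdisj, hkern, hmn⟩ := (hm.and_eventually
    ((hshift.eventually (hW (b₀ + m))).and (eventually_gt_atTop m))).exists
  have hrange : range (T a₀ (b₀ + n)) = range (T (b₀ + m) (b₀ + n)) := by
    refine Submodule.eq_of_le_of_finrank_eq (hT.range_le_range (by omega) (by omega)) ?_
    rw [hrank, ← (T (b₀ + m) (b₀ + n)).finrank_range_add_finrank_ker, hkern, ha₀ _ (by omega),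
      Nat.add_sub_cancel]
  have hzero : T (b₀ + m) (b₀ + n) = 0 :=
    eq_zero_of_isNilpotent_of_disjoint_range_ker (hnil _ _ (by omega))
      (by rwa [← hrange, hkern])
  exact ⟨b₀ + n, by rw [← hT (Nat.zero_le (b₀ + m)) (by omega), hzero, zero_mul]⟩

theorem exists_matrix_eq_zero_of_isNilpotent {n : Type*} [Fintype n] [DecidableEq n]
    {A : ℕ → ℕ → Matrix n n K} (hA : IsEvolution A)
    (hnil : ∀ a b, a < b → IsNilpotent (A a b)) : ∃ b, A 0 b = 0 := by
  let toEnd : Matrix n n K ≃ₐ[K] Module.End K (n → K) := Matrix.toLinAlgEquiv'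
  obtain ⟨b, hb⟩ := (hA.map toEnd).exists_eq_zero_of_isNilpotent fun a b hab =>
    (hnil a b hab).map toEnd
  exact ⟨b, (EmbeddingLike.map_eq_zero_iff (f := toEnd)).1 hb⟩

end IsEvolution

end LinearAlgebra

section AsymptoticResidueField

open Asymptotics

theorem isBigO_exp_of_le {l : Filter ℕ} {s t : ℝ} (hst : s ≤ t) :
    (fun N : ℕ => Real.exp (s * N)) =O[l] fun N : ℕ => Real.exp (t * N) :=
  .of_norm_le fun N => by
    rw [Real.norm_of_nonneg (Real.exp_pos _).le]
    gcongr

theorem tendsto_exp_neg_mul_atTop {δ : ℝ} (hδ : 0 < δ) :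
    Tendsto (fun N : ℕ => Real.exp (-δ * N)) atTop (𝓝 0) :=
  Real.tendsto_exp_atBot.comp
    (tendsto_natCast_atTop_atTop.const_mul_atTop_of_neg (neg_neg_of_pos hδ))

theorem isBigO_mul_exp {R : Type*} [SeminormedRing R] {l : Filter ℕ} {c c' : ℕ → R} {s t u : ℝ}
    (hc : c =O[l] fun N : ℕ => Real.exp (s * N)) (hc' : c' =O[l] fun N : ℕ => Real.exp (t * N))
    (hu : s + t = u) : (fun N => c N * c' N) =O[l] fun N : ℕ => Real.exp (u * N) := by
  simpa only [← hu, add_mul, Real.exp_add] using hc.mul hc'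

/-- The ring of sequences growing subexponentially along the filter `l`; the entries of matrix
products normalized to joint spectral radius `1` lie in it. -/
def subexpSubring (R : Type*) [SeminormedRing R] (l : Filter ℕ) : Subring (ℕ → R) where
  carrier := {c | ∀ ε : ℝ, 0 < ε → c =O[l] fun N : ℕ => Real.exp (ε * N)}
  mul_mem' ha hb ε hε := isBigO_mul_exp (ha (ε / 2) (half_pos hε)) (hb (ε / 2) (half_pos hε))
    (add_halves ε)
  one_mem' ε hε := by
    refine .of_bound ‖(1 : R)‖ (.of_forall fun N => ?_)
    rw [Real.norm_of_nonneg (Real.exp_pos _).le]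
    exact le_mul_of_one_le_right (norm_nonneg _) (Real.one_le_exp (by positivity))
  add_mem' ha hb ε hε := (ha ε hε).add (hb ε hε)
  zero_mem' _ _ := isBigO_zero _ _
  neg_mem' ha ε hε := (ha ε hε).neg_left

/-- The ideal of sequences decaying exponentially along the filter `l`; in the quotient by it,
matrices of exponentially small spectral radius become nilpotent. -/
def expDecayIdeal (R : Type*) [SeminormedCommRing R] (l : Filter ℕ) :
    Ideal (subexpSubring R l) where
  carrier := {c | ∃ δ : ℝ, 0 < δ ∧ c.1 =O[l] fun N : ℕ => Real.exp (-δ * N)}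
  add_mem' := by
    rintro a b ⟨δ, hδ, ha⟩ ⟨δ', hδ', hb⟩
    exact ⟨min δ δ', lt_min hδ hδ',
      (ha.trans (isBigO_exp_of_le (neg_le_neg (min_le_left δ δ')))).add
        (hb.trans (isBigO_exp_of_le (neg_le_neg (min_le_right δ δ'))))⟩
  zero_mem' := ⟨1, one_pos, isBigO_zero _ _⟩
  smul_mem' := by
    rintro c a ⟨δ, hδ, ha⟩
    exact ⟨δ / 2, half_pos hδ, isBigO_mul_exp (c.2 (δ / 2) (half_pos hδ)) ha (by ring)⟩

theorem eventually_lt_norm_of_notMem_expDecayIdeal {R : Type*} [SeminormedCommRing R]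
    {U : Ultrafilter ℕ} {c : subexpSubring R (U : Filter ℕ)} (hc : c ∉ expDecayIdeal R U)
    {δ : ℝ} (hδ : 0 < δ) (C : ℝ) :
    ∀ᶠ N : ℕ in (U : Filter ℕ), C * Real.exp (-δ * N) < ‖c.1 N‖ := by
  simp only [← not_le, Ultrafilter.eventually_not]
  refine fun hle => hc ⟨δ, hδ, .of_bound C (hle.mono fun N hN => ?_)⟩
  rwa [Real.norm_of_nonneg (Real.exp_pos _).le]

instance expDecayIdeal_isPrime (𝕜 : Type*) [NormedField 𝕜] :
    (expDecayIdeal 𝕜 (hyperfilter ℕ : Filter ℕ)).IsPrime where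
  ne_top' := by
    rw [Ideal.ne_top_iff_one]
    rintro ⟨δ, hδ, hone⟩
    have hlim := (hone.trans_tendsto
      ((tendsto_exp_neg_mul_atTop hδ).mono_left Nat.hyperfilter_le_atTop))
    exact one_ne_zero (tendsto_nhds_unique tendsto_const_nhds hlim)
  mem_or_mem' := by
    rintro a b ⟨δ, hδ, hab⟩
    by_contra! hnot
    obtain ⟨C, hC, hbound⟩ := hab.exists_pos
    obtain ⟨N, hN, ha, hb⟩ := (hbound.bound.and
      ((eventually_lt_norm_of_notMem_expDecayIdeal hnot.1 (half_pos hδ) C).and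
        (eventually_lt_norm_of_notMem_expDecayIdeal hnot.2 (half_pos hδ) 1))).exists
    have hsplit : Real.exp (-δ * N) = Real.exp (-(δ / 2) * N) * Real.exp (-(δ / 2) * N) := by
      rw [← Real.exp_add]
      ring_nf
    have hprod := mul_lt_mul'' ha hb (by positivity) (by positivity)
    rw [Real.norm_of_nonneg (Real.exp_pos _).le, hsplit] at hN
    change ‖a.1 N * b.1 N‖ ≤ _ at hN
    rw [norm_mul] at hN
    linarith

variable {n 𝕜 : Type*} [Fintype n] [DecidableEq n] [NormedField 𝕜]

theorem norm_coeff_charpoly_le [IsAlgClosed 𝕜] {A : Matrix n n 𝕜} {B : ℝ} (hB : B ≤ 1)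
    (hA : ∀ z ∈ spectrum 𝕜 A, ‖z‖ ≤ B) {i : ℕ} (hi : i < Fintype.card n) :
    ‖A.charpoly.coeff i‖ ≤ (Fintype.card n).choose i * B := by
  have hroots : ∀ z ∈ A.charpoly.roots, ‖z‖ ≤ B := fun z hz =>
    hA z (Matrix.mem_spectrum_iff_isRoot_charpoly.2 (Polynomial.isRoot_of_mem_roots hz))
  have hB₀ : 0 ≤ B := by
    obtain ⟨z, hz⟩ := IsAlgClosed.exists_root A.charpoly (by
      rw [Matrix.charpoly_degree_eq_dim]
      exact_mod_cast (Nat.zero_lt_of_lt hi).ne')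
    exact (norm_nonneg z).trans (hA z (Matrix.mem_spectrum_iff_isRoot_charpoly.2 hz))
  have hcoeff := Polynomial.coeff_le_of_roots_le (f := RingHom.id 𝕜) (B := B) i A.charpoly_monic
    (IsAlgClosed.splits _) (by rwa [Polynomial.map_id])
  rw [Polynomial.map_id, Matrix.charpoly_natDegree_eq_dim, mul_comm] at hcoeff
  refine hcoeff.trans ?_
  gcongr
  exact pow_le_of_le_one hB₀ hB (by omega)

theorem isNilpotent_of_coeff_charpoly_eq_zero {R : Type*} [CommRing R] [Nontrivial R]
    {A : Matrix n n R} (hA : ∀ i < Fintype.card n, A.charpoly.coeff i = 0) : IsNilpotent A := by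
  have hcharpoly : A.charpoly = Polynomial.X ^ A.charpoly.natDegree := by
    rw [A.charpoly_monic.eq_X_pow_iff_natDegree_le_natTrailingDegree]
    refine Polynomial.le_natTrailingDegree A.charpoly_monic.ne_zero ?_
    rwa [A.charpoly_natDegree_eq_dim]
  have hCayleyHamilton := A.aeval_self_charpoly
  rw [hcharpoly, map_pow, Polynomial.aeval_X] at hCayleyHamilton
  exact ⟨_, hCayleyHamilton⟩

variable [IsAlgClosed 𝕜]

theorem isNilpotent_map_residueField {A : Matrix n n (subexpSubring 𝕜 (hyperfilter ℕ))} {δ : ℝ}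
    (hδ : 0 < δ)
    (hA : ∀ᶠ N : ℕ in (hyperfilter ℕ : Filter ℕ),
      ∀ z ∈ spectrum 𝕜 (A.map fun c => c.1 N), ‖z‖ ≤ Real.exp (-δ * N)) :
    IsNilpotent (A.map (algebraMap _ (expDecayIdeal 𝕜 (hyperfilter ℕ)).ResidueField)) := by
  refine isNilpotent_of_coeff_charpoly_eq_zero fun i hi => ?_
  rw [Matrix.charpoly_map, Polynomial.coeff_map, Ideal.algebraMap_residueField_eq_zero]
  refine ⟨δ, hδ, .of_bound ((Fintype.card n).choose i) (hA.mono fun N hN => ?_)⟩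
  let eval : subexpSubring 𝕜 (hyperfilter ℕ) →+* 𝕜 :=
    (Pi.evalRingHom (fun _ : ℕ => 𝕜) N).comp (Subring.subtype _)
  have hcoeff : (A.charpoly.coeff i).1 N = (A.map fun c => c.1 N).charpoly.coeff i := by
    rw [show (A.map fun c => c.1 N) = A.map eval from rfl, Matrix.charpoly_map,
      Polynomial.coeff_map]
    rfl
  rw [hcoeff, Real.norm_of_nonneg (Real.exp_pos _).le]
  refine norm_coeff_charpoly_le (Real.exp_le_one_iff.2 ?_) hN hi
  exact mul_nonpos_of_nonpos_of_nonneg (neg_nonpos.2 hδ.le) N.cast_nonneg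

theorem exists_tendsto_zero_of_spectrum_le_exp {A : ℕ → ℕ → ℕ → Matrix n n 𝕜}
    (hA : ∀ N, IsEvolution (A N))
    (hgrowth : ∀ a b i j, ∀ ε : ℝ, 0 < ε →
      (fun N => A N a b i j) =O[hyperfilter ℕ] fun N : ℕ => Real.exp (ε * N))
    (hspec : ∀ a b, a < b → ∃ δ : ℝ, 0 < δ ∧ ∀ᶠ N : ℕ in (hyperfilter ℕ : Filter ℕ),
      ∀ z ∈ spectrum 𝕜 (A N a b), ‖z‖ ≤ Real.exp (-δ * N)) :
    ∃ b, Tendsto (fun N => A N 0 b) (hyperfilter ℕ) (𝓝 0) := by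
  let germ (a b : ℕ) : Matrix n n (subexpSubring 𝕜 (hyperfilter ℕ : Filter ℕ)) :=
    Matrix.of fun i j => ⟨fun N => A N a b i j, hgrowth a b i j⟩
  have hgerm : IsEvolution germ := fun a b c hab hbc => by
    ext i j N
    simpa [germ, Matrix.mul_apply] using congr($(hA N hab hbc) i j)
  obtain ⟨b, hb⟩ := IsEvolution.exists_matrix_eq_zero_of_isNilpotent
    (hgerm.map (algebraMap _ (expDecayIdeal 𝕜 (hyperfilter ℕ)).ResidueField).mapMatrix)
    fun a b hab => by
      obtain ⟨δ, hδ, hδ'⟩ := hspec a b hab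
      exact isNilpotent_map_residueField hδ hδ'
  refine ⟨b, tendsto_pi_nhds.2 fun i => tendsto_pi_nhds.2 fun j => ?_⟩
  have hentry : algebraMap _ (expDecayIdeal 𝕜 (hyperfilter ℕ)).ResidueField (germ 0 b i j) = 0 :=
    congr($hb i j)
  obtain ⟨δ, hδ, hdecay⟩ := Ideal.algebraMap_residueField_eq_zero.1 hentry
  exact hdecay.trans_tendsto
    ((tendsto_exp_neg_mul_atTop hδ).mono_left Nat.hyperfilter_le_atTop)

end AsymptoticResidueField

theorem exists_forall_le_of_isCompact {X : Type*} [TopologicalSpace X] {K : Set X}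
    (hK : IsCompact K) {F : ℕ → X → ℝ} (hF : ∀ n, Continuous (F n)) {p : ℕ → X}
    (hp : ∀ m, p m ∈ K) {u : ℕ → ℕ → ℝ} {c : ℕ → ℝ}
    (hu : ∀ n, Tendsto (fun m => u m n) atTop (𝓝 (c n)))
    (huF : ∀ n, ∀ᶠ m in atTop, u m n ≤ F n (p m)) : ∃ q ∈ K, ∀ n, c n ≤ F n q := by
  obtain ⟨q, hq, hcluster⟩ := hK.exists_mapClusterPt (f := atTop) (u := p)
    (tendsto_principal.2 (.of_forall hp))
  obtain ⟨U, hU, hlim⟩ := mapClusterPt_iff_ultrafilter.1 hcluster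
  exact ⟨q, hq, fun n => le_of_tendsto_of_tendsto ((hu n).mono_left hU)
    (((hF n).tendsto q).comp hlim) (hU (huF n))⟩

theorem rpow_one_div_natCast_le_iff {a g : ℝ} (ha : 0 ≤ a) (hg : 0 ≤ g) {n : ℕ} (hn : n ≠ 0) :
    a ^ (1 / (n : ℝ)) ≤ g ↔ a ≤ g ^ n := by
  rw [one_div, Real.rpow_inv_le_iff_of_pos ha hg (by positivity), Real.rpow_natCast]

theorem le_rpow_one_div_natCast_iff {a g : ℝ} (ha : 0 ≤ a) (hg : 0 ≤ g) {n : ℕ} (hn : n ≠ 0) :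
    g ≤ a ^ (1 / (n : ℝ)) ↔ g ^ n ≤ a := by
  rw [one_div, Real.le_rpow_inv_iff_of_pos hg ha (by positivity), Real.rpow_natCast]

section SwitchedSystem

open scoped Matrix.Norms.L2Operator

variable {d : ℕ}

theorem norm_one_matrix_le : ‖(1 : Matrix (Fin d) (Fin d) ℂ)‖ ≤ 1 := by
  rw [Matrix.cstar_norm_def, map_one]
  exact ContinuousLinearMap.norm_id_le

theorem specRad_nonneg (A : Matrix (Fin d) (Fin d) ℂ) : 0 ≤ specRad A :=
  ENNReal.toReal_nonneg

theorem spectralRadius_le_ofReal_norm (A : Matrix (Fin d) (Fin d) ℂ) :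
    spectralRadius ℂ A ≤ ENNReal.ofReal ‖A‖ := by
  refine iSup₂_le fun z hz => ?_
  rw [← enorm_eq_nnnorm, ← ofReal_norm]
  exact ENNReal.ofReal_le_ofReal ((spectrum.norm_le_norm_mul_of_mem hz).trans
    (mul_le_of_le_one_right (norm_nonneg A) norm_one_matrix_le))

theorem specRad_le_norm (A : Matrix (Fin d) (Fin d) ℂ) : specRad A ≤ ‖A‖ :=
  ENNReal.toReal_le_of_le_ofReal (norm_nonneg A) (spectralRadius_le_ofReal_norm A)

theorem norm_le_specRad_of_mem_spectrum {A : Matrix (Fin d) (Fin d) ℂ} {z : ℂ}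
    (hz : z ∈ spectrum ℂ A) : ‖z‖ ≤ specRad A := by
  refine (ENNReal.ofReal_le_iff_le_toReal
    ((spectralRadius_le_ofReal_norm A).trans_lt ENNReal.ofReal_lt_top).ne).1 ?_
  rw [ofReal_norm, enorm_eq_nnnorm]
  exact le_iSup₂ (f := fun k (_ : k ∈ spectrum ℂ A) => (‖k‖₊ : ENNReal)) z hz

variable {I : Type*} {S : I → Matrix (Fin d) (Fin d) ℂ} {Λ : Set (ℕ → I)}

theorem ShiftInv.shift_mem (hinv : ShiftInv Λ) {x : ℕ → I} (hx : x ∈ Λ) (m : ℕ) :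
    (fun k => x (m + k)) ∈ Λ := by
  induction m with
  | zero => simpa using hx
  | succ m ih => simpa only [Nat.add_assoc, Nat.add_comm 1] using hinv _ ih

theorem prodS_add (S : I → Matrix (Fin d) (Fin d) ℂ) (x : ℕ → I) (m n : ℕ) :
    prodS S x (m + n) = prodS S (fun k => x (m + k)) n * prodS S x m := by
  induction n with
  | zero => simp [prodS]
  | succ n ih => rw [← Nat.add_assoc, prodS, ih, prodS, Matrix.mul_assoc]

theorem prodS_smul (c : ℂ) (S : I → Matrix (Fin d) (Fin d) ℂ) (x : ℕ → I) (n : ℕ) :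
    prodS (c • S) x n = c ^ n • prodS S x n := by
  induction n with
  | zero => simp [prodS]
  | succ n ih => rw [prodS, ih, Pi.smul_apply, smul_mul_smul_comm, ← pow_succ', prodS]

theorem norm_prodS_smul (c : ℂ) (S : I → Matrix (Fin d) (Fin d) ℂ) (x : ℕ → I) (n : ℕ) :
    ‖prodS (c • S) x n‖ = ‖c‖ ^ n * ‖prodS S x n‖ := by
  rw [prodS_smul, norm_smul, norm_pow]

theorem exists_mem_spectrum_prodS_of_mem_spectrum_smul {c : ℂ} (hc : c ≠ 0) {x : ℕ → I} {n : ℕ}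
    {z : ℂ} (hz : z ∈ spectrum ℂ (prodS (c • S) x n)) :
    ∃ w ∈ spectrum ℂ (prodS S x n), c ^ n * w = z := by
  rw [prodS_smul] at hz
  exact Set.mem_smul_set.1 ((spectrum.unit_smul_eq_smul (prodS S x n)
    (Units.mk0 (c ^ n) (pow_ne_zero n hc))).subset hz)

theorem continuous_prodS [TopologicalSpace I] (hS : Continuous S) (n : ℕ) :
    Continuous fun x : ℕ → I => prodS S x n := by
  induction n with
  | zero => exact continuous_const
  | succ n ih => exact (hS.comp (continuous_apply n)).matrix_mul ih

theorem continuous_norm_prodS_apply [TopologicalSpace I] (hS : Continuous S) (n : ℕ) :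
    Continuous fun q : (ℕ → I) × EuclideanSpace ℂ (Fin d) =>
      ‖Matrix.toEuclideanCLM (𝕜 := ℂ) (prodS S q.1 n) q.2‖ :=
  have hisometry : Isometry (Matrix.toEuclideanCLM (n := Fin d) (𝕜 := ℂ)) :=
    AddMonoidHomClass.isometry_of_norm _ fun _ => rfl
  ((hisometry.continuous.comp ((continuous_prodS hS n).comp continuous_fst)).clm_apply
    continuous_snd).norm

/-- The matrix driving the switched system along the signal `x` from time `a` to time `b ≥ a`;
for fixed `x` these form an evolution. -/
noncomputable def transition (S : I → Matrix (Fin d) (Fin d) ℂ) (x : ℕ → I) (a b : ℕ) :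
    Matrix (Fin d) (Fin d) ℂ :=
  prodS S (fun k => x (a + k)) (b - a)

theorem isEvolution_transition (S : I → Matrix (Fin d) (Fin d) ℂ) (x : ℕ → I) :
    IsEvolution (transition S x) := by
  intro a b c hab hbc
  obtain ⟨m, rfl⟩ := Nat.exists_eq_add_of_le hab
  obtain ⟨n, rfl⟩ := Nat.exists_eq_add_of_le hbc
  have hlen : a + m + n - a = m + n := by omega
  simp only [transition, hlen, Nat.add_sub_cancel_left, prodS_add]
  simp only [Nat.add_assoc]

theorem isBigO_transition_mul (hinv : ShiftInv Λ) {y : ℕ → I} (hy : y ∈ Λ)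
    (hgrowth : ∀ ε : ℝ, 0 < ε → ∃ C, ∀ n : ℕ, ∀ x ∈ Λ, ‖prodS S x n‖ ≤ C * Real.exp (ε * n))
    (l : Filter ℕ) (a b : ℕ) {ε : ℝ} (hε : 0 < ε) :
    (fun N => transition S y (a * N) (b * N)) =O[l] fun N : ℕ => Real.exp (ε * N) := by
  obtain ⟨C, hC⟩ := hgrowth (ε / (b + 1)) (by positivity)
  have hC₀ : 0 ≤ C := by simpa using (norm_nonneg _).trans (hC 0 y hy)
  refine .of_bound C (.of_forall fun N => (hC _ _ (hinv.shift_mem hy _)).trans ?_)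
  have hlen : ((b * N - a * N : ℕ) : ℝ) ≤ (b + 1) * N := by
    exact_mod_cast (Nat.sub_le _ _).trans (Nat.mul_le_mul_right N b.le_succ)
  have hexponent : ε / (b + 1) * (b * N - a * N : ℕ) ≤ ε * N :=
    calc ε / (b + 1) * (b * N - a * N : ℕ) ≤ ε / (b + 1) * ((b + 1) * N) := by gcongr
      _ = ε * N := by field_simp
  rw [Real.norm_of_nonneg (Real.exp_pos _).le]
  exact mul_le_mul_of_nonneg_left (Real.exp_le_exp.2 hexponent) hC₀

theorem eventually_norm_le_of_mem_spectrum_transition_mul (hinv : ShiftInv Λ) {y : ℕ → I}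
    (hy : y ∈ Λ) {δ : ℝ} (hδ : 0 < δ)
    (hspec : ∀ᶠ n : ℕ in atTop, ∀ x ∈ Λ, ∀ z ∈ spectrum ℂ (prodS S x n), ‖z‖ ≤ Real.exp (-δ * n))
    {a b : ℕ} (hab : a < b) :
    ∀ᶠ N : ℕ in atTop, ∀ z ∈ spectrum ℂ (transition S y (a * N) (b * N)),
      ‖z‖ ≤ Real.exp (-δ * N) := by
  have hlen (N : ℕ) : N ≤ b * N - a * N := by
    rw [← Nat.sub_mul]
    exact Nat.le_mul_of_pos_left N (Nat.sub_pos_of_lt hab)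
  filter_upwards [(tendsto_atTop_mono hlen tendsto_id).eventually hspec] with N hN z hz
  refine (hN _ (hinv.shift_mem hy _) z hz).trans (Real.exp_le_exp.2 ?_)
  exact mul_le_mul_of_nonpos_left (by exact_mod_cast hlen N) (neg_nonpos.2 hδ.le)

theorem exists_norm_prodS_lt_one (hinv : ShiftInv Λ) {y : ℕ → I} (hy : y ∈ Λ)
    (hgrowth : ∀ ε : ℝ, 0 < ε → ∃ C, ∀ n : ℕ, ∀ x ∈ Λ, ‖prodS S x n‖ ≤ C * Real.exp (ε * n))
    {δ : ℝ} (hδ : 0 < δ)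
    (hspec : ∀ᶠ n : ℕ in atTop, ∀ x ∈ Λ, ∀ z ∈ spectrum ℂ (prodS S x n),
      ‖z‖ ≤ Real.exp (-δ * n)) :
    ∃ n, ‖prodS S y n‖ < 1 := by
  obtain ⟨b, hb⟩ := exists_tendsto_zero_of_spectrum_le_exp
    (A := fun N a b => transition S y (a * N) (b * N))
    (fun N a b c hab hbc => isEvolution_transition S y (Nat.mul_le_mul_right N hab)
      (Nat.mul_le_mul_right N hbc))
    (fun a b i j ε hε =>
      ((Matrix.entryLinearMap ℂ ℂ i j).toContinuousLinearMap.isBigO_comp _ _).trans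
        (isBigO_transition_mul hinv hy hgrowth _ a b hε))
    (fun a b hab => ⟨δ, hδ, Nat.hyperfilter_le_atTop
      (eventually_norm_le_of_mem_spectrum_transition_mul hinv hy hδ hspec hab)⟩)
  obtain ⟨N, hN⟩ := (hb.norm.eventually_lt_const (norm_zero.trans_lt one_pos)).exists
  exact ⟨b * N, by simpa [transition] using hN⟩

theorem exists_norm_prodS_lt_pow (hinv : ShiftInv Λ) {y : ℕ → I} (hy : y ∈ Λ) {r ρ : ℝ}
    (hr : 0 < r) (hrρ : r < ρ)
    (hgrowth : ∀ g > ρ, ∃ C, ∀ n, ∀ x ∈ Λ, ‖prodS S x n‖ ≤ C * g ^ n)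
    (hspec : ∀ᶠ n in atTop, ∀ x ∈ Λ, specRad (prodS S x n) ≤ r ^ n) :
    ∃ n, ‖prodS S y n‖ < ρ ^ n := by
  have hρ : 0 < ρ := hr.trans hrρ
  let c : ℂ := (ρ : ℂ)⁻¹
  have hc : c ≠ 0 := by simpa [c] using hρ.ne'
  have hnormc : ‖c‖ = ρ⁻¹ := by simp [c, abs_of_pos hρ]
  have hscaled_growth (ε : ℝ) (hε : 0 < ε) :
      ∃ C, ∀ n : ℕ, ∀ x ∈ Λ, ‖prodS (c • S) x n‖ ≤ C * Real.exp (ε * n) := by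
    obtain ⟨C, hC⟩ := hgrowth _ (lt_mul_of_one_lt_right hρ (Real.one_lt_exp_iff.2 hε))
    refine ⟨C, fun n x hx => ?_⟩
    rw [norm_prodS_smul, hnormc, inv_pow, inv_mul_le_iff₀ (by positivity)]
    refine (hC n x hx).trans_eq ?_
    rw [mul_pow, mul_comm ε, Real.exp_nat_mul]
    ring
  have hscaled_spec : ∀ᶠ n : ℕ in atTop, ∀ x ∈ Λ, ∀ z ∈ spectrum ℂ (prodS (c • S) x n),
      ‖z‖ ≤ Real.exp (-Real.log (ρ / r) * n) := by
    filter_upwards [hspec] with n hn x hx z hz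
    obtain ⟨w, hw, rfl⟩ := exists_mem_spectrum_prodS_of_mem_spectrum_smul hc hz
    calc ‖c ^ n * w‖ = (ρ ^ n)⁻¹ * ‖w‖ := by rw [norm_mul, norm_pow, hnormc, inv_pow]
      _ ≤ (ρ ^ n)⁻¹ * r ^ n := by
        gcongr
        exact (norm_le_specRad_of_mem_spectrum hw).trans (hn x hx)
      _ = (ρ / r)⁻¹ ^ n := by rw [inv_div, div_pow, inv_mul_eq_div]
      _ = Real.exp (-Real.log (ρ / r) * n) := by
        rw [mul_comm, Real.exp_nat_mul, Real.exp_neg, Real.exp_log (by positivity)]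
  obtain ⟨n, hn⟩ := exists_norm_prodS_lt_one hinv hy hscaled_growth
    (Real.log_pos ((one_lt_div hr).2 hrρ)) hscaled_spec
  rw [norm_prodS_smul, hnormc, inv_pow, inv_mul_lt_one₀ (by positivity)] at hn
  exact ⟨n, hn⟩

/-- The joint spectral radius of `S` over `Λ`: the infimum of the exponential rates `g > 0` at which
the products `prodS S x n`, `x ∈ Λ`, grow uniformly at most. -/
noncomputable def jsr (S : I → Matrix (Fin d) (Fin d) ℂ) (Λ : Set (ℕ → I)) : ℝ :=
  sInf {g | 0 < g ∧ ∃ C, ∀ n, ∀ x ∈ Λ, ‖prodS S x n‖ ≤ C * g ^ n}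

theorem jsr_nonneg : 0 ≤ jsr S Λ :=
  Real.sInf_nonneg fun _ hg => hg.1.le

theorem jsr_le_of_norm_prodS_le {g C : ℝ} (hg : 0 < g)
    (hC : ∀ n, ∀ x ∈ Λ, ‖prodS S x n‖ ≤ C * g ^ n) : jsr S Λ ≤ g :=
  csInf_le ⟨0, fun _ hg => hg.1.le⟩ ⟨hg, C, hC⟩

theorem norm_prodS_le_of_forall_exists_contraction (hinv : ShiftInv Λ) {g C : ℝ} (hg : 0 < g)
    {m : ℕ} (hC : ∀ n ≤ m, ∀ x ∈ Λ, ‖prodS S x n‖ ≤ C * g ^ n)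
    (hcontraction : ∀ x ∈ Λ, ∀ v, ∃ p ≤ m, p ≠ 0 ∧
      ‖Matrix.toEuclideanCLM (𝕜 := ℂ) (prodS S x p) v‖ ≤ g ^ p * ‖v‖)
    (n : ℕ) {x : ℕ → I} (hx : x ∈ Λ) : ‖prodS S x n‖ ≤ C * g ^ n := by
  have hC₀ : 0 ≤ C := by simpa using (norm_nonneg _).trans (hC 0 m.zero_le x hx)
  refine (Matrix.toEuclideanCLM (𝕜 := ℂ) (prodS S x n)).opNorm_le_bound (by positivity) fun v => ?_
  induction n using Nat.strong_induction_on generalizing x v with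
  | _ n ih =>
    rcases le_or_gt n m with hnm | hmn
    · exact ContinuousLinearMap.le_of_opNorm_le _ (hC n hnm x hx) v
    obtain ⟨p, hpm, hp₀, hp⟩ := hcontraction x hx v
    obtain ⟨q, rfl⟩ := Nat.exists_eq_add_of_le (hpm.trans hmn.le)
    rw [prodS_add, map_mul]
    calc _ ≤ C * g ^ q * ‖Matrix.toEuclideanCLM (𝕜 := ℂ) (prodS S x p) v‖ :=
          ih q (by omega) (hinv.shift_mem hx p) _
      _ ≤ C * g ^ q * (g ^ p * ‖v‖) := by gcongr
      _ = C * g ^ (p + q) * ‖v‖ := by ring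

variable [TopologicalSpace I]

theorem exists_norm_prodS_le_pow (hS : Continuous S) (hcomp : IsCompact Λ) (hinv : ShiftInv Λ) :
    ∃ K ≥ 1, ∀ n, ∀ x ∈ Λ, ‖prodS S x n‖ ≤ K ^ n := by
  obtain ⟨K, hK⟩ := hcomp.exists_bound_of_continuousOn (f := fun x : ℕ → I => S (x 0))
    (hS.comp (continuous_apply 0)).continuousOn
  refine ⟨max K 1, le_max_right K 1, fun n x hx => ?_⟩
  induction n with
  | zero => simpa [prodS] using norm_one_matrix_le
  | succ n ih =>
    rw [prodS, pow_succ']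
    refine (norm_mul_le _ _).trans ?_
    gcongr
    exact (hK _ (hinv.shift_mem hx n)).trans (le_max_left K 1)

theorem exists_norm_prodS_le_of_jsr_lt (hS : Continuous S) (hcomp : IsCompact Λ) (hinv : ShiftInv Λ)
    {g : ℝ} (hg : jsr S Λ < g) :
    ∃ C, ∀ n, ∀ x ∈ Λ, ‖prodS S x n‖ ≤ C * g ^ n := by
  obtain ⟨K, hK, hbound⟩ := exists_norm_prodS_le_pow hS hcomp hinv
  obtain ⟨g', ⟨hg'₀, C, hC⟩, hg'⟩ := exists_lt_of_csInf_lt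
    (s := {g | 0 < g ∧ ∃ C, ∀ n, ∀ x ∈ Λ, ‖prodS S x n‖ ≤ C * g ^ n})
    ⟨K, by positivity, 1, by simpa using hbound⟩ hg
  refine ⟨max C 0, fun n x hx => (hC n x hx).trans ?_⟩
  gcongr
  exact le_max_left C 0

theorem eventually_norm_prodS_le_pow (hS : Continuous S) (hcomp : IsCompact Λ) (hinv : ShiftInv Λ)
    {g : ℝ} (hg : jsr S Λ < g) :
    ∀ᶠ n in atTop, ∀ x ∈ Λ, ‖prodS S x n‖ ≤ g ^ n := by
  obtain ⟨g', hg', hg'g⟩ := exists_between hg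
  have hg'₀ : 0 ≤ g' := jsr_nonneg.trans hg'.le
  obtain ⟨C, hC⟩ := exists_norm_prodS_le_of_jsr_lt hS hcomp hinv hg'
  have hlittle := (isLittleO_pow_pow_of_lt_left hg'₀ hg'g).const_mul_left C
  filter_upwards [hlittle.bound one_pos] with n hn x hx
  rw [one_mul, Real.norm_of_nonneg (pow_nonneg (hg'₀.trans hg'g.le) n)] at hn
  exact (hC n x hx).trans ((le_abs_self _).trans hn)

theorem exists_pow_le_norm_prodS_apply_of_lt_jsr (hS : Continuous S) (hcomp : IsCompact Λ)
    (hinv : ShiftInv Λ) {g : ℝ} (hg : 0 < g) (hgjsr : g < jsr S Λ) (m : ℕ) :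
    ∃ y ∈ Λ, ∃ v, ‖v‖ = 1 ∧
      ∀ n ≤ m, g ^ n ≤ ‖Matrix.toEuclideanCLM (𝕜 := ℂ) (prodS S y n) v‖ := by
  obtain ⟨K, hK, hbound⟩ := exists_norm_prodS_le_pow hS hcomp hinv
  have hshort (n : ℕ) (hn : n ≤ m + 1) (x : ℕ → I) (hx : x ∈ Λ) :
      ‖prodS S x n‖ ≤ max 1 (K / g) ^ (m + 1) * g ^ n :=
    calc ‖prodS S x n‖ ≤ K ^ n := hbound n x hx
      _ = (K / g) ^ n * g ^ n := by rw [div_pow, div_mul_cancel₀ _ (by positivity)]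
      _ ≤ max 1 (K / g) ^ n * g ^ n := by gcongr; exact le_max_right _ _
      _ ≤ max 1 (K / g) ^ (m + 1) * g ^ n := by gcongr; exact le_max_left _ _
  obtain ⟨y, hy, w, hw⟩ : ∃ y ∈ Λ, ∃ w, ∀ p ≤ m + 1, p ≠ 0 →
      g ^ p * ‖w‖ < ‖Matrix.toEuclideanCLM (𝕜 := ℂ) (prodS S y p) w‖ := by
    by_contra! hcontraction
    exact hgjsr.not_ge (jsr_le_of_norm_prodS_le hg fun n x hx =>
      norm_prodS_le_of_forall_exists_contraction hinv hg hshort hcontraction n hx)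
  have hw₀ : w ≠ 0 := by
    rintro rfl
    simpa using hw 1 (by omega) one_ne_zero
  refine ⟨y, hy, (‖w‖⁻¹ : ℂ) • w, norm_smul_inv_norm hw₀, fun n hn => ?_⟩
  rw [map_smul, norm_smul, norm_inv, Complex.norm_real, norm_norm, inv_mul_eq_div,
    le_div_iff₀ (norm_pos_iff.2 hw₀)]
  rcases eq_or_ne n 0 with rfl | hn₀
  · simp [prodS]
  · exact (hw n (by omega) hn₀).le

theorem exists_pow_jsr_le_norm_prodS_apply (hS : Continuous S) (hcomp : IsCompact Λ)
    (hinv : ShiftInv Λ) (hd : 1 ≤ d) (hne : Λ.Nonempty) :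
    ∃ y ∈ Λ, ∃ v, ‖v‖ = 1 ∧
      ∀ n, jsr S Λ ^ n ≤ ‖Matrix.toEuclideanCLM (𝕜 := ℂ) (prodS S y n) v‖ := by
  rcases jsr_nonneg.eq_or_lt with hjsr | hjsr
  · obtain ⟨y, hy⟩ := hne
    refine ⟨y, hy, EuclideanSpace.single ⟨0, hd⟩ 1, by simp, fun n => ?_⟩
    rcases eq_or_ne n 0 with rfl | hn
    · simp [prodS]
    · rw [← hjsr, zero_pow hn]
      exact norm_nonneg _
  obtain ⟨g, -, hg, hlim⟩ := exists_seq_strictMono_tendsto' hjsr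
  choose y hy v hv hyv using fun m =>
    exists_pow_le_norm_prodS_apply_of_lt_jsr hS hcomp hinv (hg m).1 (hg m).2 m
  obtain ⟨⟨z, w⟩, ⟨hz, hw⟩, hzw⟩ := exists_forall_le_of_isCompact
    (hcomp.prod (isCompact_sphere (0 : EuclideanSpace ℂ (Fin d)) 1))
    (continuous_norm_prodS_apply hS)
    (p := fun m => (y m, v m)) (fun m => ⟨hy m, by simpa using hv m⟩)
    (fun n => hlim.pow n)
    (fun n => (eventually_ge_atTop n).mono fun m hnm => hyv m n hnm)
  exact ⟨z, hz, w, by simpa using hw, hzw⟩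

theorem jsr_le_of_specRad_le_pow (hS : Continuous S) (hcomp : IsCompact Λ) (hinv : ShiftInv Λ)
    (hd : 1 ≤ d) (hne : Λ.Nonempty) {r : ℝ} (hr : 0 < r)
    (hspec : ∀ᶠ n in atTop, ∀ x ∈ Λ, specRad (prodS S x n) ≤ r ^ n) : jsr S Λ ≤ r := by
  by_contra! hlt
  obtain ⟨y, hy, v, hv, hyv⟩ := exists_pow_jsr_le_norm_prodS_apply hS hcomp hinv hd hne
  obtain ⟨n, hn⟩ := exists_norm_prodS_lt_pow hinv hy hr hlt
    (fun g hg => exists_norm_prodS_le_of_jsr_lt hS hcomp hinv hg) hspec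
  exact hn.not_ge ((hyv n).trans
    ((Matrix.toEuclideanCLM (𝕜 := ℂ) (prodS S y n)).unit_le_opNorm v hv.le))

theorem eventually_norm_prodS_rpow_le (hS : Continuous S) (hcomp : IsCompact Λ) (hinv : ShiftInv Λ)
    {g : ℝ} (hg : jsr S Λ < g) :
    ∀ᶠ n : ℕ in atTop, ∀ x ∈ Λ, ‖prodS S x n‖ ^ (1 / (n : ℝ)) ≤ g := by
  filter_upwards [eventually_norm_prodS_le_pow hS hcomp hinv hg, eventually_ne_atTop 0]
    with n hn hn₀ x hx
  exact (rpow_one_div_natCast_le_iff (norm_nonneg _) (jsr_nonneg.trans hg.le) hn₀).2 (hn x hx)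

theorem limsup_norm_prodS_le_jsr (hS : Continuous S) (hcomp : IsCompact Λ) (hinv : ShiftInv Λ)
    {x : ℕ → I} (hx : x ∈ Λ) :
    limsup (fun n : ℕ => ‖prodS S x n‖ ^ (1 / (n : ℝ))) atTop ≤ jsr S Λ :=
  le_of_forall_gt_imp_ge_of_dense fun g hg => limsup_le_of_le
    (isCoboundedUnder_le_of_le atTop (x := 0) fun n => by positivity)
    ((eventually_norm_prodS_rpow_le hS hcomp hinv hg).mono fun n hn => hn x hx)

theorem gsr_eq_jsr (hS : Continuous S) (hcomp : IsCompact Λ) (hinv : ShiftInv Λ)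
    (hd : 1 ≤ d) (hne : Λ.Nonempty) : gsr S Λ = jsr S Λ := by
  have hnonneg (n : ℕ) (x : ℕ → I) : 0 ≤ specRad (prodS S x n) ^ (1 / (n : ℝ)) :=
    Real.rpow_nonneg (specRad_nonneg _) _
  have hbound {g : ℝ} (hg : jsr S Λ < g) :
      ∀ᶠ n : ℕ in atTop, ∀ x : Λ, specRad (prodS S x n) ^ (1 / (n : ℝ)) ≤ g := by
    filter_upwards [eventually_norm_prodS_rpow_le hS hcomp hinv hg] with n hn x
    exact (Real.rpow_le_rpow (specRad_nonneg _) (specRad_le_norm _) (by positivity)).trans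
      (hn x x.2)
  have hbound_iSup {g : ℝ} (hg : jsr S Λ < g) :
      ∀ᶠ n : ℕ in atTop, ⨆ x : Λ, specRad (prodS S x n) ^ (1 / (n : ℝ)) ≤ g :=
    (hbound hg).mono fun n hn => Real.iSup_le hn (jsr_nonneg.trans hg.le)
  have hiSup_nonneg (n : ℕ) : 0 ≤ ⨆ x : Λ, specRad (prodS S x n) ^ (1 / (n : ℝ)) :=
    Real.iSup_nonneg fun x => hnonneg n x
  refine le_antisymm (le_of_forall_gt_imp_ge_of_dense fun g hg => ?_)
    (le_of_forall_gt_imp_ge_of_dense fun r hr => ?_)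
  · exact limsup_le_of_le (isCoboundedUnder_le_of_le atTop hiSup_nonneg) (hbound_iSup hg)
  · have hlt := eventually_lt_of_limsup_lt hr
      (isBoundedUnder_of_eventually_le (hbound_iSup (lt_add_one _)))
    obtain ⟨n, hn⟩ := hlt.exists
    have hr₀ : 0 < r := (hiSup_nonneg n).trans_lt hn
    refine jsr_le_of_specRad_le_pow hS hcomp hinv hd hne hr₀ ?_
    filter_upwards [hlt, hbound (lt_add_one _), eventually_ne_atTop 0] with n hn hbdd hn₀ x hx
    refine (rpow_one_div_natCast_le_iff (specRad_nonneg _) hr₀.le hn₀).1 (le_trans ?_ hn.le)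
    exact le_ciSup (f := fun x : Λ => specRad (prodS S x n) ^ (1 / (n : ℝ)))
      ⟨_, Set.forall_mem_range.2 hbdd⟩ ⟨x, hx⟩

theorem exists_tendsto_norm_prodS_apply_rpow_jsr (hS : Continuous S) (hcomp : IsCompact Λ)
    (hinv : ShiftInv Λ) (hd : 1 ≤ d) (hne : Λ.Nonempty) :
    ∃ y ∈ Λ, ∃ v, ‖v‖ = 1 ∧
      Tendsto (fun n : ℕ => ‖prodS S y n‖ ^ (1 / (n : ℝ))) atTop (𝓝 (jsr S Λ)) ∧
      Tendsto (fun n : ℕ => ‖Matrix.toEuclideanCLM (𝕜 := ℂ) (prodS S y n) v‖ ^ (1 / (n : ℝ)))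
        atTop (𝓝 (jsr S Λ)) := by
  obtain ⟨y, hy, v, hv, hyv⟩ := exists_pow_jsr_le_norm_prodS_apply hS hcomp hinv hd hne
  have hle (n : ℕ) : ‖Matrix.toEuclideanCLM (𝕜 := ℂ) (prodS S y n) v‖ ^ (1 / (n : ℝ)) ≤
      ‖prodS S y n‖ ^ (1 / (n : ℝ)) := by
    gcongr
    exact (Matrix.toEuclideanCLM (𝕜 := ℂ) (prodS S y n)).unit_le_opNorm v hv.le
  have hlower : ∀ᶠ n : ℕ in atTop,
      jsr S Λ ≤ ‖Matrix.toEuclideanCLM (𝕜 := ℂ) (prodS S y n) v‖ ^ (1 / (n : ℝ)) :=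
    (eventually_ne_atTop 0).mono fun n hn =>
      (le_rpow_one_div_natCast_iff (norm_nonneg _) jsr_nonneg hn).2 (hyv n)
  have hlim : Tendsto (fun n : ℕ => ‖prodS S y n‖ ^ (1 / (n : ℝ))) atTop (𝓝 (jsr S Λ)) := by
    refine tendsto_order.2 ⟨fun g hg => ?_, fun g hg => ?_⟩
    · exact hlower.mono fun n hn => hg.trans_le (hn.trans (hle n))
    · obtain ⟨g', hg', hlt⟩ := exists_between hg
      exact (eventually_norm_prodS_rpow_le hS hcomp hinv hg').mono fun n hn =>
        (hn y hy).trans_lt hlt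
  exact ⟨y, hy, v, hv, hlim,
    tendsto_of_tendsto_of_tendsto_of_le_of_le' tendsto_const_nhds hlim hlower (.of_forall hle)⟩

end SwitchedSystem

theorem gsr_attained_optimization_general {d : ℕ} (hd : 1 ≤ d) {I : Type*} [TopologicalSpace I]
    (S : I → Matrix (Fin d) (Fin d) ℂ) (hS : Continuous S)
    (Λ : Set (ℕ → I)) (hne : Λ.Nonempty) (hcomp : IsCompact Λ) (hinv : ShiftInv Λ) :
    (∀ x ∈ Λ, limsup (fun n : ℕ => opNorm (prodS S x n) ^ (1 / (n : ℝ))) atTop ≤ gsr S Λ) ∧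
      ∃ x ∈ Λ, ∃ x₀ : EuclideanSpace ℂ (Fin d), ‖x₀‖ = 1 ∧
        Tendsto (fun n : ℕ => opNorm (prodS S x n) ^ (1 / (n : ℝ))) atTop (𝓝 (gsr S Λ)) ∧
        Tendsto (fun n : ℕ => ‖Matrix.toEuclideanCLM (𝕜 := ℂ) (prodS S x n) x₀‖ ^ (1 / (n : ℝ)))
          atTop (𝓝 (gsr S Λ)) := by
  rw [gsr_eq_jsr hS hcomp hinv hd hne]
  exact ⟨fun x hx => limsup_norm_prodS_le_jsr hS hcomp hinv hx,
    exists_tendsto_norm_prodS_apply_rpow_jsr hS hcomp hinv hd hne⟩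

/-- **Optimization of the spectral radius (Corollary 2.7).**
`ρ(S|Λ)` is the maximum over `i(·) ∈ Λ` of the exponential growth rate
`limsup ‖S_{i_n}⋯S_{i_1}‖^{1/n}`, and it is moreover attained by the Lyapunov exponent of
some pair `(x₀, i(·))` with `x₀` a unit vector. -/
theorem gsr_attained_optimization {d : ℕ} (hd : 1 ≤ d) {I : Type*} [MetricSpace I]
    (S : I → Matrix (Fin d) (Fin d) ℂ) (hS : Continuous S)
    (Λ : Set (ℕ → I)) (hne : Λ.Nonempty) (hcomp : IsCompact Λ) (hinv : ShiftInv Λ) :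
    (∃ x ∈ Λ, gsr S Λ =
        Filter.limsup (fun n : ℕ => opNorm (prodS S x n) ^ (1 / (n : ℝ))) Filter.atTop) ∧
      (∀ x ∈ Λ,
        Filter.limsup (fun n : ℕ => opNorm (prodS S x n) ^ (1 / (n : ℝ))) Filter.atTop ≤
          gsr S Λ) ∧
      ∃ x ∈ Λ, ∃ x₀ : EuclideanSpace ℂ (Fin d), ‖x₀‖ = 1 ∧
        gsr S Λ = Filter.limsup
          (fun n : ℕ => ‖(Matrix.toEuclideanCLM (𝕜 := ℂ) (prodS S x n)) x₀‖ ^ (1 / (n : ℝ)))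
          Filter.atTop := by
  obtain ⟨hle, x, hx, x₀, hx₀, hnorm, hvec⟩ :=
    gsr_attained_optimization_general hd S hS Λ hne hcomp hinv
  exact ⟨⟨x, hx, hnorm.limsup_eq.symm⟩, hle, x, hx, x₀, hx₀, hvec.limsup_eq.symm⟩
end

section
/- Let d ≥ 1 and let {S_i}_{i∈I} be a bounded family of matrices in Matrix d d ℂ indexed by a nonempty set I. Then the generalized spectral radius satisfies ρ(S) = sup_{n≥1} sup_{w∈I^n} ρ(S_w)^{1/n}; that is, the limsup in the definition of ρ(S) equals the supremum over all n of the normalized spectral radii of products of length n. -/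
open Filter Topology MeasureTheory

/-!
In any algebra the spectral radius satisfies `ρ(a) ^ k ≤ ρ(a ^ k)`, and the `k`-th power of a
product of `n` elements of `T` is a product of `n * k` elements of `T`. Hence the normalized suprema
`ρₙ = sup_{a ∈ T ^ n} ρ(a) ^ (1 / n)` satisfy `ρₙ ≤ ρₙₖ`, so each `ρₙ` is attained or exceeded at
arbitrarily large indices and is therefore at most the limsup. The comparison takes place in `ℝ≥0∞`;
the bound `ρₙ ≤ C` for a family of norm at most `C` carries it over to real suprema and limsups.
-/

open scoped ENNReal NNReal Pointwise

theorem limsup_atTop_eq_iSup_succ_of_le_mul {α : Type*} [CompleteLattice α] {u : ℕ → α}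
    (hu : ∀ n k, n ≠ 0 → k ≠ 0 → u n ≤ u (n * k)) :
    limsup u atTop = ⨆ n, u (n + 1) := by
  apply le_antisymm
  · rw [← limsup_nat_add u 1]
    exact limsup_le_iSup
  · refine iSup_le fun n ↦ le_limsup_of_frequently_le' (frequently_atTop.2 fun N ↦ ?_)
    exact ⟨(n + 1) * (N + 1), by nlinarith, hu _ _ n.succ_ne_zero N.succ_ne_zero⟩

theorem limsup_toReal_eq_iSup_succ {u : ℕ → ℝ≥0∞}
    (hu : limsup u atTop = ⨆ n, u (n + 1)) {b : ℝ≥0} (hb : ∀ n, n ≠ 0 → u n ≤ b) :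
    limsup (fun n ↦ (u n).toReal) atTop = ⨆ n, (u (n + 1)).toReal := by
  have eventually_le : ∀ᶠ n in atTop, u n ≤ b := (eventually_ne_atTop 0).mono hb
  rw [ENNReal.limsup_toReal_eq ENNReal.coe_ne_top eventually_le, hu, ENNReal.toReal_iSup]
  exact fun n ↦ ne_top_of_le_ne_top ENNReal.coe_ne_top (hb _ n.succ_ne_zero)

/-- The supremum `ρₙ(T) = sup ρ(a) ^ (1 / n)` over all products `a` of `n` elements of `T`, where
`T ^ n` is the pointwise power of sets. The values lie in `ℝ≥0∞`, so that the supremum is meaningful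
for unbounded `T`. At `n = 0` the exponent is the junk value `1 / 0 = 0`. -/
noncomputable def normalizedSpectralRadius (𝕜 : Type*) {A : Type*} [NormedField 𝕜] [Ring A]
    [Algebra 𝕜 A] (T : Set A) (n : ℕ) : ℝ≥0∞ :=
  ⨆ a ∈ T ^ n, spectralRadius 𝕜 a ^ (1 / (n : ℝ))

section Algebra

variable (𝕜 : Type*) {A : Type*} [NormedField 𝕜] [Ring A] [Algebra 𝕜 A]

theorem spectralRadius_rpow_le_spectralRadius_pow_rpow (a : A) {n k : ℕ} (hk : k ≠ 0) :
    spectralRadius 𝕜 a ^ (1 / (n : ℝ)) ≤ spectralRadius 𝕜 (a ^ k) ^ (1 / ((n * k : ℕ) : ℝ)) := by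
  have exponent_eq : 1 / (n : ℝ) = k * (1 / ((n * k : ℕ) : ℝ)) := by
    push_cast
    field_simp
  calc spectralRadius 𝕜 a ^ (1 / (n : ℝ))
      = (spectralRadius 𝕜 a ^ k) ^ (1 / ((n * k : ℕ) : ℝ)) := by
        rw [exponent_eq, ENNReal.rpow_mul, ENNReal.rpow_natCast]
    _ ≤ spectralRadius 𝕜 (a ^ k) ^ (1 / ((n * k : ℕ) : ℝ)) := by
        gcongr
        exact spectrum.spectralRadius_pow_le a k hk

theorem normalizedSpectralRadius_le_mul (T : Set A) (n : ℕ) {k : ℕ} (hk : k ≠ 0) :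
    normalizedSpectralRadius 𝕜 T n ≤ normalizedSpectralRadius 𝕜 T (n * k) := by
  refine iSup₂_le fun a ha ↦ ?_
  have pow_mem : a ^ k ∈ T ^ (n * k) := pow_mul T n k ▸ Set.pow_mem_pow ha
  exact (spectralRadius_rpow_le_spectralRadius_pow_rpow 𝕜 a hk).trans
    (le_iSup₂_of_le (a ^ k) pow_mem le_rfl)

theorem gsr_eq_iSup_general (T : Set A) :
    limsup (normalizedSpectralRadius 𝕜 T) atTop = ⨆ n, normalizedSpectralRadius 𝕜 T (n + 1) :=
  limsup_atTop_eq_iSup_succ_of_le_mul fun n _ _ hk ↦ normalizedSpectralRadius_le_mul 𝕜 T n hk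

end Algebra

theorem nnnorm_le_pow_of_mem_pow {A : Type*} [SeminormedRing A] [NormOneClass A] {T : Set A}
    {C : ℝ≥0} (hT : ∀ a ∈ T, ‖a‖₊ ≤ C) {n : ℕ} {a : A} (ha : a ∈ T ^ n) : ‖a‖₊ ≤ C ^ n := by
  induction n generalizing a with
  | zero =>
    obtain rfl : a = 1 := by simpa using ha
    simp
  | succ n ih =>
    rw [pow_succ] at ha ⊢
    obtain ⟨b, hb, c, hc, rfl⟩ := Set.mem_mul.1 ha
    exact (nnnorm_mul_le b c).trans (mul_le_mul' (ih hb) (hT c hc))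

theorem normalizedSpectralRadius_le_of_forall_nnnorm_le (𝕜 : Type*) {A : Type*} [NormedField 𝕜]
    [NormedRing A] [NormedAlgebra 𝕜 A] [CompleteSpace A] [NormOneClass A] {T : Set A} {C : ℝ≥0}
    (hT : ∀ a ∈ T, ‖a‖₊ ≤ C) {n : ℕ} (hn : n ≠ 0) : normalizedSpectralRadius 𝕜 T n ≤ C := by
  refine iSup₂_le fun a ha ↦ ?_
  have spectralRadius_le : spectralRadius 𝕜 a ≤ (C : ℝ≥0∞) ^ n :=
    (spectrum.spectralRadius_le_nnnorm a).trans (mod_cast nnnorm_le_pow_of_mem_pow hT ha)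
  calc spectralRadius 𝕜 a ^ (1 / (n : ℝ)) ≤ ((C : ℝ≥0∞) ^ n) ^ (1 / (n : ℝ)) := by gcongr
    _ = C := by rw [one_div, ENNReal.pow_rpow_inv_natCast hn]

section Matrix

variable {d : ℕ} {I : Type*} (S : I → Matrix (Fin d) (Fin d) ℂ)

theorem prodS_congr {x y : ℕ → I} {n : ℕ} (hxy : ∀ k < n, x k = y k) :
    prodS S x n = prodS S y n := by
  induction n with
  | zero => rfl
  | succ n ih =>
    rw [prodS, prodS, hxy n n.lt_succ_self, ih fun k hk ↦ hxy k (hk.trans n.lt_succ_self)]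

theorem prodS_update_succ (x : ℕ → I) (n : ℕ) (i : I) :
    prodS S (Function.update x n i) (n + 1) = S i * prodS S x n := by
  rw [prodS, Function.update_self,
    prodS_congr S fun k hk ↦ Function.update_of_ne hk.ne i x]

theorem range_prodS [Nonempty I] (n : ℕ) :
    Set.range (fun x ↦ prodS S x n) = Set.range S ^ n := by
  induction n with
  | zero => simp [prodS, Set.range_const, Set.singleton_one]
  | succ n ih =>
    rw [pow_succ', ← ih]
    apply Set.Subset.antisymm
    · rintro _ ⟨x, rfl⟩
      exact Set.mul_mem_mul ⟨x n, rfl⟩ ⟨x, rfl⟩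
    · rintro _ ⟨_, ⟨i, rfl⟩, _, ⟨x, rfl⟩, rfl⟩
      exact ⟨Function.update x n i, prodS_update_succ S x n i⟩

open scoped Matrix.Norms.L2Operator

theorem iSup_specRad_prodS_rpow [NeZero d] [Nonempty I] (n : ℕ) :
    ⨆ x : ℕ → I, specRad (prodS S x n) ^ (1 / (n : ℝ)) =
      (normalizedSpectralRadius ℂ (Set.range S) n).toReal := by
  have spectralRadius_ne_top (A : Matrix (Fin d) (Fin d) ℂ) : spectralRadius ℂ A ≠ ∞ :=
    ne_top_of_le_ne_top ENNReal.coe_ne_top (spectrum.spectralRadius_le_nnnorm A)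
  rw [normalizedSpectralRadius, ← range_prodS, iSup_range, ENNReal.toReal_iSup fun x ↦
    ENNReal.rpow_ne_top_of_nonneg (by positivity) (spectralRadius_ne_top _)]
  simp only [specRad, ENNReal.toReal_rpow]

theorem normalizedSpectralRadius_range_le [NeZero d] {C : ℝ} (hC : ∀ i, opNorm (S i) ≤ C) {n : ℕ}
    (hn : n ≠ 0) : normalizedSpectralRadius ℂ (Set.range S) n ≤ C.toNNReal := by
  have nnnorm_le (i : I) : ‖S i‖₊ ≤ C.toNNReal := NNReal.le_toNNReal_of_coe_le (hC i)
  exact normalizedSpectralRadius_le_of_forall_nnnorm_le ℂ (Set.forall_mem_range.2 nnnorm_le) hn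

end Matrix

/-- For a bounded family of matrices, the generalized spectral radius (a `limsup` over `n`)
equals the supremum over all `n ≥ 1` of the normalized spectral radii of products of
length `n`.  (Products of length `n` over words in `I^n` are expressed as `prodS S x n`
over signals `x : ℕ → I`.) -/
theorem gsr_eq_iSup {d : ℕ} (hd : 1 ≤ d) {I : Type*} [Nonempty I]
    (S : I → Matrix (Fin d) (Fin d) ℂ)
    (hbdd : ∃ C : ℝ, ∀ i : I, opNorm (S i) ≤ C) :
    Filter.limsup
        (fun n : ℕ => ⨆ x : ℕ → I, specRad (prodS S x n) ^ (1 / (n : ℝ))) Filter.atTop =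
      ⨆ n : ℕ, ⨆ x : ℕ → I, specRad (prodS S x (n + 1)) ^ (1 / (n + 1 : ℝ)) := by
  obtain ⟨C, hC⟩ := hbdd
  have : NeZero d := ⟨Nat.one_le_iff_ne_zero.1 hd⟩
  simpa only [← iSup_specRad_prodS_rpow, Nat.cast_succ] using
    limsup_toReal_eq_iSup_succ (gsr_eq_iSup_general ℂ (Set.range S))
      fun n ↦ normalizedSpectralRadius_range_le S hC
end
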